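/- Let A be a complex unital semisimple Banach algebra, let B be a complex unital Banach algebra possessing a separating family of finite-dimensional irreducible representations, and let T : A → B be a linear, unital, surjective map satisfying ρ(T(a)) = ρ(a) for every a ∈ A. Then σ_B(T(a)) ⊆ σ_A(a) for every a ∈ A; in particular, T(a) is invertible in B whenever a is invertible in A. -/

import Mathlib

/-- A bilinear-type cancellation in prime rings: `p c q + q c p = 0` for all `c` forces `p = 0` or
`q = 0`. -/
theorem eq_zero_or_eq_zero_of_forall_mul_mul_add {R : Type*} [Ring R] [Algebra ℂ R]
    (hR : ∀ p q : R, (∀ c, p * c * q = 0) → p = 0 ∨ q = 0) {p q : R}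
    (h : ∀ c, p * c * q + q * c * p = 0) : p = 0 ∨ q = 0 := by
  have key : ∀ c d, (q * c * q) * d * p = 0 := by
    intro c d
    have h1 := h (c * q * d)
    have h2 : q * c * (p * d * q + q * d * p) = 0 := by rw [h d, mul_zero]
    have h3 : (p * c * q + q * c * p) * (d * q) = 0 := by rw [h c, zero_mul]
    have h4 : (2 : ℂ) • ((q * c * q) * d * p) = 0 := by
      calc (2 : ℂ) • ((q * c * q) * d * p)
          = (p * (c * q * d) * q + q * (c * q * d) * p) + q * c * (p * d * q + q * d * p)
            - (p * c * q + q * c * p) * (d * q) := by rw [two_smul]; noncomm_ring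
        _ = 0 := by rw [h1, h2, h3]; simp
    exact (smul_eq_zero.mp h4).resolve_left two_ne_zero
  by_cases hp : p = 0
  · exact Or.inl hp
  · refine Or.inr ?_
    have hq : ∀ c, q * c * q = 0 := fun c => (hR _ _ (key c)).resolve_right hp
    simpa using hR q q hq

/-- Herstein: a Jordan derivation of a prime algebra is a derivation. -/
theorem jordan_derivation_apply_mul {R : Type*} [Ring R] [Algebra ℂ R]
    (hR : ∀ p q : R, (∀ c, p * c * q = 0) → p = 0 ∨ q = 0) (D : R →ₗ[ℂ] R)
    (hD : ∀ a, D (a * a) = D a * a + a * D a) (a b : R) :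
    D (a * b) = D a * b + a * D b := by
  have half : ∀ x y : R, x + x = y + y → x = y := by
    intro x y h
    have : (2 : ℂ) • (x - y) = 0 := by rw [smul_sub, two_smul, two_smul, h, sub_self]
    exact sub_eq_zero.mp ((smul_eq_zero.mp this).resolve_left two_ne_zero)
  have polar : ∀ a b, D (a * b) + D (b * a) = D a * b + a * D b + (D b * a + b * D a) := by
    intro a b
    have h := hD (a + b)
    simp only [add_mul, mul_add, map_add, hD] at h
    rw [← sub_eq_zero] at h ⊢
    rw [← h]; abel
  have triple : ∀ a b, D (a * b * a) = D a * b * a + a * D b * a + a * b * D a := by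
    intro a b
    apply half
    have h1 := polar a (a * b + b * a)
    have h2 := polar (a * a) b
    have h3 := polar a b
    have e : D (a * (a * b + b * a)) + D ((a * b + b * a) * a)
        = D (a * a * b) + D (b * (a * a)) + (D (a * b * a) + D (a * b * a)) := by
      simp only [← map_add]; congr 1; noncomm_ring
    rw [e, h2, hD, map_add, h3] at h1
    rw [← sub_eq_zero] at h1 ⊢
    rw [← h1]; noncomm_ring
  have triple' : ∀ a b c, D (a * b * c) + D (c * b * a) =
      D a * b * c + a * D b * c + a * b * D c + (D c * b * a + c * D b * a + c * b * D a) := by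
    intro a b c
    have h := triple (a + c) b
    simp only [add_mul, mul_add, map_add, triple] at h
    rw [← sub_eq_zero] at h ⊢
    rw [← h]; abel
  set δ : R → R → R := fun a b => D (a * b) - D a * b - a * D b with hδ
  have anti : ∀ a b, D (b * a) - D b * a - b * D a = - δ a b := by
    intro a b
    have h := polar a b
    rw [← sub_eq_zero] at h ⊢
    rw [← h]; simp only [hδ]; abel
  have alt : ∀ a b, δ a b = 0 ∨ a * b - b * a = 0 := by
    intro a b
    apply eq_zero_or_eq_zero_of_forall_mul_mul_add hR
    intro c
    have h1 := triple' (a * b) c (b * a)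
    have h2 := triple a (b * c * b)
    have h3 := triple b (a * c * a)
    rw [triple b c] at h2
    rw [triple a c] at h3
    have e : D (a * b * c * (b * a)) + D (b * a * c * (a * b))
        = D (a * (b * c * b) * a) + D (b * (a * c * a) * b) := by
      simp only [← map_add]; congr 1; noncomm_ring
    rw [e, h2, h3] at h1
    have h4 : D (b * a) = D b * a + b * D a - δ a b := by
      rw [sub_eq_add_neg, ← anti]; abel
    have h5 : D (a * b) = D a * b + a * D b + δ a b := by simp only [hδ]; abel
    rw [h4, h5, ← sub_eq_zero] at h1
    rw [← h1]; noncomm_ring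
  have addr : ∀ a b c, δ a (b + c) = δ a b + δ a c := by
    intro a b c; simp only [hδ, mul_add, map_add]; abel
  have addl : ∀ a b c, δ (a + c) b = δ a b + δ c b := by
    intro a b c; simp only [hδ, add_mul, map_add]; abel
  by_contra hne
  have hab : δ a b ≠ 0 := fun h0 => hne <| by
    rw [← sub_eq_zero, ← h0]; simp only [hδ]; abel
  have hcomm := (alt a b).resolve_left hab
  have ca : ∀ c, a * c = c * a := by
    intro c
    rw [← sub_eq_zero]
    rcases alt a c with h | h
    · have h' := (alt a (b + c)).resolve_left (by rw [addr, h, add_zero]; exact hab)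
      calc a * c - c * a = (a * (b + c) - (b + c) * a) - (a * b - b * a) := by noncomm_ring
        _ = 0 := by rw [h', hcomm, sub_zero]
    · exact h
  have cb : ∀ c, b * c = c * b := by
    intro c
    rw [← sub_eq_zero]
    rcases alt c b with h | h
    · have h' := (alt (a + c) b).resolve_left (by rw [addl, h, add_zero]; exact hab)
      calc b * c - c * b = (a * b - b * a) - ((a + c) * b - b * (a + c)) := by noncomm_ring
        _ = 0 := by rw [h', hcomm, sub_zero]
    · rw [← neg_eq_zero, ← h]; abel
  apply hne
  apply half
  have h := polar a b
  rw [cb a, ← ca (D b), cb (D a)] at h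
  rw [h]; abel

/-- Brešar: an alternating biderivation `F` satisfies `[x, y] w F(u, v) = F(x, y) w [u, v]`. -/
theorem biderivation_commutator_identity {R : Type*} [Ring R] [Algebra ℂ R]
    (F : R →ₗ[ℂ] R →ₗ[ℂ] R) (hanti : ∀ x y, F x y = - F y x)
    (hF : ∀ x a b, F x (a * b) = F x a * b + a * F x b) (x y w u v : R) :
    (x * y - y * x) * w * F u v = F x y * w * (u * v - v * u) := by
  have hF' : ∀ a b y, F (a * b) y = F a y * b + a * F b y := by
    intro a b y
    rw [hanti, hF, hanti a, hanti b]; noncomm_ring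
  have base : ∀ x y u v, (x * y - y * x) * F u v = F x y * (u * v - v * u) := by
    intro x y u v
    have h : F (x * u) (y * v) = F (x * u) (y * v) := rfl
    conv_lhs at h => rw [hF, hF', hF']
    conv_rhs at h => rw [hF', hF, hF]
    rw [← sub_eq_zero] at h ⊢
    rw [← neg_eq_zero, ← h]; noncomm_ring
  have h1 := base x y (w * u) v
  have h2 := base x y w v
  rw [hF', mul_add] at h1
  have h3 : (x * y - y * x) * (F w v * u) = F x y * (w * v - v * w) * u := by
    rw [← h2]; noncomm_ring
  rw [h3, ← sub_eq_zero] at h1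
  rw [← sub_eq_zero, ← h1]; noncomm_ring

theorem Matrix.eq_zero_or_eq_zero_of_forall_mul_mul {m : Type*} [Fintype m] [DecidableEq m]
    (p q : Matrix m m ℂ) (h : ∀ c, p * c * q = 0) : p = 0 ∨ q = 0 := by
  by_contra! hc
  obtain ⟨hp, hq⟩ := hc
  obtain ⟨i, j, hij⟩ : ∃ i j, p i j ≠ 0 := by
    by_contra! h'; exact hp (Matrix.ext h')
  obtain ⟨k, l, hkl⟩ : ∃ i j, q i j ≠ 0 := by
    by_contra! h'; exact hq (Matrix.ext h')
  have := congrFun (congrFun (h (Matrix.single j k 1)) i) l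
  rw [Matrix.mul_assoc, Matrix.mul_apply, Finset.sum_eq_single j] at this
  · simp_all
  · intro b _ hb; simp [hb]
  · simp

theorem spectralRadius_le_nnnorm_mul_nnnorm_one {A : Type*} [NormedRing A] [NormedAlgebra ℂ A]
    [CompleteSpace A] (a : A) : spectralRadius ℂ a ≤ (‖a‖₊ * ‖(1 : A)‖₊ : NNReal) :=
  iSup₂_le fun k hk => by
    exact_mod_cast (spectrum.norm_le_norm_mul_of_mem hk : ‖k‖ ≤ ‖a‖ * ‖(1 : A)‖)

theorem spectralRadius_ne_top {A : Type*} [NormedRing A] [NormedAlgebra ℂ A] [CompleteSpace A]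
    (a : A) : spectralRadius ℂ a ≠ ⊤ :=
  ne_top_of_le_ne_top ENNReal.coe_ne_top (spectralRadius_le_nnnorm_mul_nnnorm_one a)

theorem spectralRadius_toReal_le {A : Type*} [NormedRing A] [NormedAlgebra ℂ A] [CompleteSpace A]
    (a : A) : (spectralRadius ℂ a).toReal ≤ ‖a‖ * ‖(1 : A)‖ := by
  have := ENNReal.toReal_mono ENNReal.coe_ne_top (spectralRadius_le_nnnorm_mul_nnnorm_one a)
  simpa using this

theorem norm_le_spectralRadius_toReal {A : Type*} [NormedRing A] [NormedAlgebra ℂ A]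
    [CompleteSpace A] {a : A} {z : ℂ} (hz : z ∈ spectrum ℂ a) :
    ‖z‖ ≤ (spectralRadius ℂ a).toReal := by
  have h : (‖z‖₊ : ENNReal) ≤ spectralRadius ℂ a := le_iSup₂_of_le z hz le_rfl
  simpa using ENNReal.toReal_mono (spectralRadius_ne_top a) h

theorem spectralRadius_units_conj {A : Type*} [Ring A] [Algebra ℂ A] (u : Aˣ) (a : A) :
    spectralRadius ℂ (u * a * (u⁻¹ : Aˣ) : A) = spectralRadius ℂ a := by
  unfold spectralRadius
  rw [spectrum.units_conjugate]

/-- Liouville along an inner one-parameter group: a differentiable functional bounded on the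
conjugacy orbit of `a` has derivative vanishing on commutators `[x, a]`. -/
theorem HasFDerivAt.apply_commutator_eq_zero {A : Type*} [NormedRing A] [NormedAlgebra ℂ A]
    [CompleteSpace A] {g : A → ℂ} {a : A} {g' : A →L[ℂ] ℂ} (hg' : HasFDerivAt g g' a)
    (hg : Differentiable ℂ g) {C : ℝ} (hC : ∀ u : Aˣ, ‖g (u * a * (u⁻¹ : Aˣ))‖ ≤ C) (x : A) :
    g' (x * a - a * x) = 0 := by
  set γ : ℂ → A := fun t => NormedSpace.exp (t • x) * a * NormedSpace.exp (t • (-x)) with hγ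
  have hγd : Differentiable ℂ γ :=
    ((differentiable_exp_smul_const ℂ x).mul_const a).mul (differentiable_exp_smul_const ℂ (-x))
  have hγ0 : γ 0 = a := by simp [hγ]
  have hγ' : HasDerivAt γ (x * a - a * x) 0 := by
    have h1 : HasDerivAt (fun t : ℂ => NormedSpace.exp (t • x)) x 0 := by
      simpa using hasDerivAt_exp_smul_const (𝕂 := ℂ) x 0
    have h2 : HasDerivAt (fun t : ℂ => NormedSpace.exp (t • (-x))) (-x) 0 := by
      simpa using hasDerivAt_exp_smul_const (𝕂 := ℂ) (-x) 0
    convert! (h1.mul_const a).mul h2 using 1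
    simp [sub_eq_add_neg]
  have hunit : ∀ t, ∃ u : Aˣ, γ t = u * a * (u⁻¹ : Aˣ) := by
    intro t
    let : NormedAlgebra ℚ A := NormedAlgebra.restrictScalars ℚ ℂ A
    have hc : Commute (t • x) (t • (-x)) := by
      simp [smul_neg, (Commute.refl (t • x)).neg_right]
    refine ⟨⟨NormedSpace.exp (t • x), NormedSpace.exp (t • (-x)), ?_, ?_⟩, rfl⟩
    · rw [← NormedSpace.exp_add_of_commute hc]; simp
    · rw [← NormedSpace.exp_add_of_commute hc.symm]; simp
  have hconst : ∀ t, g (γ t) = g (γ 0) := fun t =>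
    (hg.comp hγd).apply_eq_apply_of_bounded (isBounded_iff_forall_norm_le.mpr ⟨C, by
      rintro _ ⟨t, rfl⟩
      obtain ⟨u, hu⟩ := hunit t
      simpa only [Function.comp, hu] using hC u⟩) t 0
  have hd : HasDerivAt (g ∘ γ) (g' (x * a - a * x)) 0 := by
    rw [← hγ0] at hg'
    exact hg'.comp_hasDerivAt 0 hγ'
  have h0 : HasDerivAt (g ∘ γ) 0 0 := by
    have : g ∘ γ = fun _ => g (γ 0) := funext hconst
    rw [this]; exact hasDerivAt_const _ _
  exact hd.unique h0

theorem Matrix.norm_trace_le_of_spectrum {m : Type*} [Fintype m] [DecidableEq m]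
    (M : Matrix m m ℂ) {R : ℝ} (h : ∀ z ∈ spectrum ℂ M, ‖z‖ ≤ R) :
    ‖M.trace‖ ≤ Fintype.card m * R := by
  rw [Matrix.trace_eq_sum_roots_charpoly]
  have hcard : M.charpoly.roots.card = Fintype.card m := by
    rw [← (IsAlgClosed.splits M.charpoly).natDegree_eq_card_roots, Matrix.charpoly_natDegree_eq_dim]
  calc ‖M.charpoly.roots.sum‖ ≤ (M.charpoly.roots.map norm).sum :=
        Multiset.le_sum_of_subadditive norm norm_zero.le norm_add_le _
    _ ≤ (M.charpoly.roots.map norm).card • R := by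
        apply Multiset.sum_le_card_nsmul
        intro y hy
        obtain ⟨z, hz, rfl⟩ := Multiset.mem_map.mp hy
        exact h z (Matrix.mem_spectrum_of_isRoot_charpoly (Polynomial.isRoot_of_mem_roots hz))
    _ = _ := by rw [Multiset.card_map, hcard, nsmul_eq_mul]

theorem Matrix.norm_trace_pow_le_of_spectrum {m : Type*} [Fintype m] [DecidableEq m]
    (M : Matrix m m ℂ) {R : ℝ} (h : ∀ z ∈ spectrum ℂ M, ‖z‖ ≤ R) {k : ℕ} (hk : 0 < k) :
    ‖(M ^ k).trace‖ ≤ Fintype.card m * R ^ k := by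
  apply Matrix.norm_trace_le_of_spectrum
  intro z hz
  rw [spectrum.map_pow_of_pos M hk] at hz
  obtain ⟨w, hw, rfl⟩ := hz
  simp only [norm_pow]
  gcongr
  exact h w hw

/-- A unital surjective linear map onto a matrix algebra which does not increase the spectral
radius. -/
structure IsMatrixContraction {A : Type*} [NormedRing A] [NormedAlgebra ℂ A] {m : Type*} [Fintype m]
    [DecidableEq m] (S : A →ₗ[ℂ] Matrix m m ℂ) : Prop where
  surj : Function.Surjective S
  map_one : S 1 = 1
  norm_le : ∀ a, ∀ z ∈ spectrum ℂ (S a), ‖z‖ ≤ (spectralRadius ℂ a).toReal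

namespace IsMatrixContraction

variable {A : Type*} [NormedRing A] [NormedAlgebra ℂ A] [CompleteSpace A]
  {m : Type*} [Fintype m] [DecidableEq m] {S : A →ₗ[ℂ] Matrix m m ℂ}

theorem continuous (hS : IsMatrixContraction S) : Continuous S := by
  have hb : ∀ a, ‖(S a * S a).trace‖ ≤ Fintype.card m * (‖a‖ * ‖(1 : A)‖) ^ 2 := by
    intro a
    rw [← sq]
    refine (Matrix.norm_trace_pow_le_of_spectrum _ (hS.norm_le a) two_pos).trans ?_
    gcongr
    exact spectralRadius_toReal_le a
  refine continuous_matrix fun i j => ?_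
  obtain ⟨b, hb'⟩ := hS.surj (Matrix.single j i 1)
  let f : A →ₗ[ℂ] ℂ := Matrix.traceLinearMap m ℂ ℂ ∘ₗ LinearMap.mulRight ℂ (S b) ∘ₗ S
  have hf : ∀ a, f a = (S a * S b).trace := fun a => rfl
  have hfe : ∀ a, f a = S a i j := by
    intro a; rw [hf, hb', Matrix.trace_mul_single]; simp
  obtain ⟨C, hC⟩ := LinearMap.bound_of_ball_bound (r := 1) one_pos
    (Fintype.card m * ((1 + ‖b‖) * ‖(1 : A)‖) ^ 2 * 2) f (by
      intro z hz
      have hz : ‖z‖ < 1 := by simpa using hz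
      have e : 4 * f z = (S (z + b) * S (z + b)).trace - (S (z - b) * S (z - b)).trace := by
        rw [hf]
        simp only [map_add, map_sub, add_mul, mul_add, sub_mul, mul_sub, Matrix.trace_add,
          Matrix.trace_sub]
        rw [Matrix.trace_mul_comm (S b) (S z)]; ring
      have h4 : 4 * ‖f z‖ ≤ Fintype.card m * ((1 + ‖b‖) * ‖(1 : A)‖) ^ 2 * 2 := by
        calc 4 * ‖f z‖ = ‖4 * f z‖ := by simp
          _ ≤ ‖(S (z + b) * S (z + b)).trace‖ + ‖(S (z - b) * S (z - b)).trace‖ := by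
              rw [e]; exact norm_sub_le _ _
          _ ≤ Fintype.card m * (‖z + b‖ * ‖(1 : A)‖) ^ 2 +
              Fintype.card m * (‖z - b‖ * ‖(1 : A)‖) ^ 2 := add_le_add (hb _) (hb _)
          _ ≤ Fintype.card m * ((1 + ‖b‖) * ‖(1 : A)‖) ^ 2 +
              Fintype.card m * ((1 + ‖b‖) * ‖(1 : A)‖) ^ 2 := by
              gcongr
              · exact (norm_add_le _ _).trans (by gcongr)
              · exact (norm_sub_le _ _).trans (by gcongr)
          _ = _ := by ring
      linarith [norm_nonneg (f z)])
  have : Continuous f := AddMonoidHomClass.continuous_of_bound f C hC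
  exact this.congr hfe

open scoped Matrix.Norms.Operator in
theorem trace_mul_commutator (hS : IsMatrixContraction S) (x a : A) :
    (S a * S (x * a - a * x)).trace = 0 ∧ (S a * S a * S (x * a - a * x)).trace = 0 := by
  let L : A →L[ℂ] Matrix m m ℂ := ⟨S, hS.continuous⟩
  let τ : Matrix m m ℂ →L[ℂ] ℂ := LinearMap.toContinuousLinearMap (Matrix.traceLinearMap m ℂ ℂ)
  have hbd : ∀ k : ℕ, 0 < k → ∀ u : Aˣ, ‖((S (u * a * (u⁻¹ : Aˣ))) ^ k).trace‖ ≤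
      Fintype.card m * (spectralRadius ℂ a).toReal ^ k := by
    intro k hk u
    rw [← spectralRadius_units_conj u a]
    exact Matrix.norm_trace_pow_le_of_spectrum _ (hS.norm_le _) hk
  have hL : HasFDerivAt L L a := L.hasFDerivAt
  constructor
  · have h2 := τ.hasFDerivAt.comp a (hL.mul' hL)
    have h := h2.apply_commutator_eq_zero (x := x)
      (τ.differentiable.comp (L.differentiable.mul L.differentiable)) (by
        intro u
        have := hbd 2 two_pos u
        rw [pow_two (S _)] at this
        exact this)
    have h' : (S a * S (x * a - a * x) + S (x * a - a * x) * S a).trace = 0 := h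
    rw [Matrix.trace_add, Matrix.trace_mul_comm (S (x * a - a * x)), ← two_mul] at h'
    simpa using h'
  · have h2 := τ.hasFDerivAt.comp a ((hL.mul' hL).mul' hL)
    have h := h2.apply_commutator_eq_zero (x := x)
      (τ.differentiable.comp ((L.differentiable.mul L.differentiable).mul L.differentiable)) (by
        intro u
        have := hbd 3 three_pos u
        rw [pow_succ (S _), pow_two (S _)] at this
        exact this)
    set w := S (x * a - a * x)
    have h' : (S a * S a * w + (S a * w + w * S a) * S a).trace = 0 := h
    rw [add_mul, Matrix.trace_add, Matrix.trace_add, Matrix.trace_mul_comm (S a * w),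
      mul_assoc w, Matrix.trace_mul_comm w, ← mul_assoc] at h'
    have : 3 * (S a * S a * w).trace = 0 := by rw [← h']; ring
    simpa using this

theorem trace_commutator_mul_add (hS : IsMatrixContraction S) (x a b : A) :
    (S (x * a - a * x) * S b).trace + (S a * S (x * b - b * x)).trace = 0 := by
  have h := (hS.trace_mul_commutator x (a + b)).1
  have ha := (hS.trace_mul_commutator x a).1
  have hb := (hS.trace_mul_commutator x b).1
  have e : x * (a + b) - (a + b) * x = (x * a - a * x) + (x * b - b * x) := by noncomm_ring
  rw [e, map_add, map_add, add_mul, mul_add, mul_add] at h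
  simp only [Matrix.trace_add] at h
  rw [ha, hb, Matrix.trace_mul_comm (S b)] at h
  linear_combination h

theorem map_commutator_eq_zero (hS : IsMatrixContraction S) {a : A} (ha : S a = 0) (x : A) :
    S (x * a - a * x) = 0 := by
  refine Matrix.ext_iff_trace_mul_right.mpr fun M => ?_
  obtain ⟨b, rfl⟩ := hS.surj M
  have := hS.trace_commutator_mul_add x a b
  rw [ha] at this
  simpa using this

/-- The commutator of the domain descends along `S` to an alternating biderivation of the matrix
algebra. -/
theorem exists_biderivation (hS : IsMatrixContraction S) :
    ∃ F : Matrix m m ℂ →ₗ[ℂ] Matrix m m ℂ →ₗ[ℂ] Matrix m m ℂ,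
      (∀ x y, S (x * y - y * x) = F (S x) (S y)) ∧ (∀ X Y, F X Y = - F Y X) ∧
      ∀ X Y Z, F X (Y * Z) = F X Y * Z + Y * F X Z := by
  obtain ⟨s, hs⟩ := S.exists_rightInverse_of_surjective (LinearMap.range_eq_top.mpr hS.surj)
  have hs' : ∀ X, S (s X) = X := fun X => LinearMap.congr_fun hs X
  let F : Matrix m m ℂ →ₗ[ℂ] Matrix m m ℂ →ₗ[ℂ] Matrix m m ℂ :=
    LinearMap.mk₂ ℂ (fun X Y => S (s X * s Y - s Y * s X))
      (fun X X' Y => by rw [← map_add]; congr 1; rw [map_add]; noncomm_ring)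
      (fun c X Y => by rw [← map_smul]; simp [smul_sub])
      (fun X Y Y' => by rw [← map_add]; congr 1; rw [map_add]; noncomm_ring)
      (fun c X Y => by rw [← map_smul]; simp [smul_sub])
  have hF : ∀ x y, S (x * y - y * x) = F (S x) (S y) := by
    intro x y
    have h1 := hS.map_commutator_eq_zero (a := y - s (S y)) (by simp [hs']) x
    have h2 := hS.map_commutator_eq_zero (a := x - s (S x)) (by simp [hs']) (s (S y))
    change S (x * y - y * x) = S (s (S x) * s (S y) - s (S y) * s (S x))
    rw [← sub_eq_zero, ← map_sub]
    calc _ = S ((x * (y - s (S y)) - (y - s (S y)) * x) -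
          (s (S y) * (x - s (S x)) - (x - s (S x)) * s (S y))) := by congr 1; noncomm_ring
      _ = 0 := by rw [map_sub, h1, h2, sub_zero]
  have hanti : ∀ X Y, F X Y = - F Y X := by
    intro X Y
    change S (s X * s Y - s Y * s X) = - S (s Y * s X - s X * s Y)
    rw [← map_neg, neg_sub]
  have h2 : ∀ X Y Z, (F X Y * Z).trace + (Y * F X Z).trace = 0 := by
    intro X Y Z
    obtain ⟨x, rfl⟩ := hS.surj X
    obtain ⟨y, rfl⟩ := hS.surj Y
    obtain ⟨z, rfl⟩ := hS.surj Z
    rw [← hF, ← hF]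
    exact hS.trace_commutator_mul_add x y z
  have h3 : ∀ X Y, (Y * Y * F X Y).trace = 0 := by
    intro X Y
    obtain ⟨x, rfl⟩ := hS.surj X
    obtain ⟨y, rfl⟩ := hS.surj Y
    rw [← hF]
    exact (hS.trace_mul_commutator x y).2
  refine ⟨F, hF, hanti, fun X Y Z => ?_⟩
  refine jordan_derivation_apply_mul Matrix.eq_zero_or_eq_zero_of_forall_mul_mul (F X) ?_ Y Z
  intro Y
  refine Matrix.ext_iff_trace_mul_right.mpr fun W => ?_
  have p := h3 X (Y + W)
  have q := h3 X (Y - W)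
  have r := h3 X W
  have t := h2 X (Y * Y) W
  simp only [map_add, map_sub, add_mul, mul_add, sub_mul, mul_sub, Matrix.trace_add,
    Matrix.trace_sub] at p q ⊢
  have c1 : (Y * W * F X Y).trace = (F X Y * Y * W).trace := by
    rw [Matrix.trace_mul_comm, ← mul_assoc]
  have c2 : (W * Y * F X Y).trace = (Y * F X Y * W).trace := by
    rw [mul_assoc, Matrix.trace_mul_comm]
  rw [c1, c2] at p q
  linear_combination t - p / 2 + q / 2 + r

theorem map_commutator_eq_zero_of_commute (hS : IsMatrixContraction S) {x y : A}
    (h : S x * S y - S y * S x = 0) : S (x * y - y * x) = 0 := by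
  obtain ⟨F, hF, hanti, hder⟩ := hS.exists_biderivation
  have key : ∀ w U V, F (S x) (S y) * w * (U * V - V * U) = 0 := by
    intro w U V
    rw [← biderivation_commutator_identity F hanti hder, h, zero_mul, zero_mul]
  rw [hF]
  by_cases hc : ∃ U V : Matrix m m ℂ, U * V - V * U ≠ 0
  · obtain ⟨U, V, hUV⟩ := hc
    exact (Matrix.eq_zero_or_eq_zero_of_forall_mul_mul _ _ fun w => key w U V).resolve_right hUV
  · push Not at hc
    have hsub : ∀ i j : m, i = j := by
      intro i j
      by_contra hij
      have := congrFun (congrFun (hc (Matrix.single i i 1) (Matrix.single i j 1)) i) j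
      simp [Matrix.single_mul_single_same, Matrix.single_mul_single_of_ne, Ne.symm hij] at this
    have htr : (F (S x) (S y)).trace = 0 := by
      rw [← hF]
      have := hS.trace_commutator_mul_add x y 1
      simpa [hS.map_one] using this
    have : Subsingleton m := ⟨hsub⟩
    ext i j
    rw [hsub j i]
    simpa [Matrix.trace, Fintype.sum_subsingleton _ i] using htr

theorem commute_of_map_commutator_eq_zero (hS : IsMatrixContraction S)
    (hne : ∃ u v, S (u * v - v * u) ≠ 0) {x y : A} (h : S (x * y - y * x) = 0) :
    S x * S y - S y * S x = 0 := by
  obtain ⟨F, hF, hanti, hder⟩ := hS.exists_biderivation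
  obtain ⟨u, v, huv⟩ := hne
  rw [hF] at h huv
  refine (Matrix.eq_zero_or_eq_zero_of_forall_mul_mul _ _ fun w => ?_).resolve_right huv
  rw [biderivation_commutator_identity F hanti hder, h, zero_mul, zero_mul]

end IsMatrixContraction

theorem isUnit_one_add_of_spectralRadius_eq_zero {A : Type*} [Ring A] [Algebra ℂ A] {q : A}
    (hq : spectralRadius ℂ q = 0) : IsUnit (1 + q) := by
  have h : (-1 : ℂ) ∉ spectrum ℂ q := by
    intro hmem
    have : (‖(-1 : ℂ)‖₊ : ENNReal) ≤ spectralRadius ℂ q := le_iSup₂_of_le _ hmem le_rfl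
    rw [hq] at this
    simp at this
  rw [spectrum.notMem_iff] at h
  simpa [add_comm] using h.neg

theorem exists_norm_pow_mul_pow_lt_one {A : Type*} [NormedRing A] [NormedAlgebra ℂ A]
    [CompleteSpace A] {q : A} (hq : spectralRadius ℂ q = 0) (x : A) :
    ∃ k : ℕ, ‖x ^ k * q ^ k‖ < 1 := by
  have hlim := spectrum.pow_nnnorm_pow_one_div_tendsto_nhds_spectralRadius q
  rw [hq] at hlim
  have hε : (0 : ENNReal) < ((‖x‖₊ + 1)⁻¹ : NNReal) := by
    rw [ENNReal.coe_pos]; positivity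
  obtain ⟨k, hk, hk1⟩ := ((hlim.eventually_lt_const hε).and
    (Filter.eventually_ge_atTop 1)).exists
  refine ⟨k, ?_⟩
  have hk0 : (0 : ℝ) < k := by exact_mod_cast hk1
  have hlt : ‖q ^ k‖₊ < (‖x‖₊ + 1)⁻¹ ^ k := by
    rw [← ENNReal.coe_rpow_of_nonneg _ (by positivity), ENNReal.coe_lt_coe, one_div,
      NNReal.rpow_inv_lt_iff hk0, NNReal.rpow_natCast] at hk
    exact hk
  have hlt' : ‖q ^ k‖ < ((‖x‖ + 1) ^ k)⁻¹ := by
    have : ‖q ^ k‖ < ((‖x‖ + 1)⁻¹) ^ k := by exact_mod_cast hlt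
    rwa [inv_pow] at this
  calc ‖x ^ k * q ^ k‖ ≤ ‖x ^ k‖ * ‖q ^ k‖ := norm_mul_le _ _
    _ ≤ ‖x‖ ^ k * ‖q ^ k‖ := by gcongr; exact norm_pow_le' x hk1
    _ ≤ (‖x‖ + 1) ^ k * ‖q ^ k‖ := by gcongr; linarith
    _ < (‖x‖ + 1) ^ k * ((‖x‖ + 1) ^ k)⁻¹ := by gcongr
    _ = 1 := mul_inv_cancel₀ (by positivity)

/-- A quasinilpotent element all of whose commutators are quasinilpotent lies in the radical. -/
theorem mem_jacobson_of_spectralRadius_commutator_eq_zero {A : Type*} [NormedRing A]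
    [NormedAlgebra ℂ A] [CompleteSpace A] {q : A} (hq : spectralRadius ℂ q = 0)
    (hcomm : ∀ a, spectralRadius ℂ (q * a - a * q) = 0) : q ∈ (⊥ : Ideal A).jacobson := by
  refine Ideal.mem_sInf.mpr ?_
  rintro M ⟨-, hM⟩
  have hproper : ∀ u : A, IsUnit u → u ∉ M := fun u hu hmem =>
    hM.ne_top (Ideal.eq_top_of_isUnit_mem M hmem hu)
  have hmul : ∀ b ∈ M, b * q ∈ M := by
    intro b hb
    by_contra hbq
    obtain ⟨c, d, hd, hcd⟩ : ∃ c, ∃ d ∈ M, c * (b * q) + d = 1 := by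
      obtain ⟨c, hc⟩ := hM.exists_inv hbq
      exact ⟨c, hc⟩
    refine hproper _ (isUnit_one_add_of_spectralRadius_eq_zero (hcomm (c * b))) ?_
    have e : 1 + (q * (c * b) - c * b * q) = d + (q * c) * b := by
      rw [← hcd]; noncomm_ring
    rw [e]
    exact M.add_mem hd (M.mul_mem_left _ hb)
  by_contra hqM
  obtain ⟨x, d, hd, hxd⟩ : ∃ c, ∃ d ∈ M, c * q + d = 1 := hM.exists_inv hqM
  have hpow : ∀ b ∈ M, ∀ k, b * q ^ k ∈ M := by
    intro b hb k
    induction k with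
    | zero => simpa using hb
    | succ k ih => rw [pow_succ, ← mul_assoc]; exact hmul _ ih
  have hk : ∀ k, 1 - x ^ k * q ^ k ∈ M := by
    intro k
    induction k with
    | zero => simp
    | succ k ih =>
      have e : 1 - x ^ (k + 1) * q ^ (k + 1) = (1 - x ^ k * q ^ k) + x ^ k * (d * q ^ k) := by
        have hd' : d = 1 - x * q := by rw [← hxd]; abel
        rw [hd', pow_succ, pow_succ']; noncomm_ring
      rw [e]
      exact M.add_mem ih (M.mul_mem_left _ (hpow d hd k))
  obtain ⟨k, hlt⟩ := exists_norm_pow_mul_pow_lt_one hq x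
  exact hproper _ (isUnit_one_sub_of_norm_lt_one hlt) (hk k)

/-- The states on a complex vector space `V` with a gauge `p` and a unit `e`: linear functionals
dominated by `p` and equal to `1` at `e`, viewed inside `V → ℂ` with pointwise convergence. -/
def gaugeStates {V : Type*} [AddCommGroup V] [Module ℂ V] (p : V → ℝ) (e : V) : Set (V → ℂ) :=
  {f | (∀ x y, f (x + y) = f x + f y) ∧ (∀ (c : ℂ) x, f (c • x) = c * f x) ∧ f e = 1 ∧
    ∀ v, ‖f v‖ ≤ p v}

theorem convex_gaugeStates {V : Type*} [AddCommGroup V] [Module ℂ V] (p : V → ℝ) (e : V) :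
    Convex ℝ (gaugeStates p e) := by
  rintro f ⟨hf1, hf2, hf3, hf4⟩ g ⟨hg1, hg2, hg3, hg4⟩ s t hs ht hst
  refine ⟨fun x y => ?_, fun c x => ?_, ?_, fun v => ?_⟩
  · simp only [Pi.add_apply, Pi.smul_apply, hf1, hg1, smul_add]; abel
  · simp only [Pi.add_apply, Pi.smul_apply, hf2, hg2, Complex.real_smul]; ring
  · simp only [Pi.add_apply, Pi.smul_apply, hf3, hg3, Complex.real_smul, mul_one]
    exact_mod_cast hst
  · calc ‖s • f v + t • g v‖ ≤ s * ‖f v‖ + t * ‖g v‖ := by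
          refine (norm_add_le _ _).trans (le_of_eq ?_)
          rw [norm_smul, norm_smul, Real.norm_of_nonneg hs, Real.norm_of_nonneg ht]
      _ ≤ s * p v + t * p v := by gcongr <;> solve_by_elim
      _ = p v := by rw [← add_mul, hst, one_mul]

theorem isCompact_gaugeStates {V : Type*} [AddCommGroup V] [Module ℂ V] (p : V → ℝ) (e : V) :
    IsCompact (gaugeStates p e) := by
  have hK : IsCompact (Set.univ.pi fun v : V => Metric.closedBall (0 : ℂ) (p v)) :=
    isCompact_univ_pi fun v => isCompact_closedBall _ _
  refine hK.of_isClosed_subset ?_ fun f hf v _ => by simpa using hf.2.2.2 v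
  simp only [gaugeStates, Set.ofPred_and, Set.ofPred_forall]
  refine IsClosed.inter ?_ (IsClosed.inter ?_ (IsClosed.inter ?_ ?_))
  · exact isClosed_iInter fun x => isClosed_iInter fun y =>
      isClosed_eq (by fun_prop) (by fun_prop)
  · exact isClosed_iInter fun c => isClosed_iInter fun x =>
      isClosed_eq (by fun_prop) (by fun_prop)
  · exact isClosed_eq (by fun_prop) (by fun_prop)
  · exact isClosed_iInter fun v => isClosed_le (by fun_prop) (by fun_prop)

/-- For a state `f` on `C(X, ℂ)` and `0 ≤ h ≤ 1`, the functional `g ↦ f (h g)` is dominated by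
the (real, nonnegative) number `f h`. -/
theorem gaugeStates_continuousMap_norm_apply_mul_le {X : Type*} [TopologicalSpace X]
    [CompactSpace X] {f : C(X, ℂ) → ℂ} (hf : f ∈ gaugeStates (fun v => ‖v‖) 1) {h : C(X, ℂ)}
    {η : X → ℝ} (hη : ∀ x, h x = η x) (h0 : ∀ x, 0 ≤ η x) (h1 : ∀ x, η x ≤ 1) :
    ∃ t : ℝ, 0 ≤ t ∧ t ≤ 1 ∧ f h = t ∧ ∀ g, ‖f (h * g)‖ ≤ t * ‖g‖ := by
  obtain ⟨hadd, hsmul, hone, hle⟩ := hf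
  have key : ∀ g : C(X, ℂ), ‖g‖ ≤ 1 → ‖f (h * g)‖ + ‖f (1 - h)‖ ≤ 1 := by
    intro g hg
    obtain ⟨ω, hω, hω'⟩ : ∃ ω : ℂ, ‖ω‖ = 1 ∧ ‖f (h * g)‖ = ω * f (h * g) :=
      RCLike.exists_norm_eq_mul_self _
    obtain ⟨ω₂, hω₂, hω₂'⟩ : ∃ ω : ℂ, ‖ω‖ = 1 ∧ ‖f (1 - h)‖ = ω * f (1 - h) :=
      RCLike.exists_norm_eq_mul_self _
    have hn : ‖ω • (h * g) + ω₂ • (1 - h)‖ ≤ 1 := by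
      rw [ContinuousMap.norm_le _ zero_le_one]
      intro x
      have hgx : ‖g x‖ ≤ 1 := (g.norm_coe_le_norm x).trans hg
      have e : (1 : ℂ) - h x = ((1 - η x : ℝ) : ℂ) := by rw [hη]; push_cast; ring
      calc ‖ω * (h x * g x) + ω₂ * (1 - h x)‖ ≤ ‖ω * (h x * g x)‖ + ‖ω₂ * (1 - h x)‖ :=
            norm_add_le _ _
        _ = η x * ‖g x‖ + (1 - η x) := by
            rw [e, hη, norm_mul, norm_mul, norm_mul, hω, hω₂, Complex.norm_real,
              Complex.norm_real, Real.norm_of_nonneg (h0 x),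
              Real.norm_of_nonneg (sub_nonneg.mpr (h1 x))]
            ring
        _ ≤ η x * 1 + (1 - η x) := by gcongr; exact h0 x
        _ = 1 := by ring
    have := (hle _).trans hn
    rw [hadd, hsmul, hsmul, ← hω', ← hω₂', ← Complex.ofReal_add, Complex.norm_real] at this
    exact (le_abs_self _).trans this
  have hsum : f h + f (1 - h) = 1 := by rw [← hadd, add_sub_cancel, hone]
  have hx := key 1 (by rw [ContinuousMap.norm_le _ zero_le_one]; simp)
  rw [mul_one] at hx
  have r1 : (f h).re ≤ ‖f h‖ := Complex.re_le_norm _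
  have r2 : (f (1 - h)).re ≤ ‖f (1 - h)‖ := Complex.re_le_norm _
  have r3 : (f h).re + (f (1 - h)).re = 1 := by
    rw [← Complex.add_re, hsum, Complex.one_re]
  have e1 : (f h).re = ‖f h‖ := by linarith
  have e2 : (f (1 - h)).re = ‖f (1 - h)‖ := by linarith
  have hnonneg : ∀ z : ℂ, z.re = ‖z‖ → z = (‖z‖ : ℂ) := by
    intro z hz
    have := (Complex.re_eq_norm).mp hz
    obtain ⟨h1, h2⟩ := Complex.nonneg_iff.mp this
    rw [← hz]
    apply Complex.ext <;> simp [← h2]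
  refine ⟨‖f h‖, norm_nonneg _, by linarith [norm_nonneg (f (1 - h))], hnonneg _ e1, fun g => ?_⟩
  have hb : ∀ g : C(X, ℂ), ‖g‖ ≤ 1 → ‖f (h * g)‖ ≤ ‖f h‖ := fun g hg => by
    linarith [key g hg]
  rcases eq_or_ne g 0 with rfl | hg
  · have := hle (h * 0)
    simpa using this
  · have hg' : 0 < ‖g‖ := norm_pos_iff.mpr hg
    have := hb (((‖g‖⁻¹ : ℝ) : ℂ) • g) (by
      rw [norm_smul, Complex.norm_real, norm_inv, norm_norm, inv_mul_cancel₀ hg'.ne'])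
    rw [mul_smul_comm, hsmul, norm_mul, Complex.norm_real, norm_inv, norm_norm,
      inv_mul_le_iff₀ hg'] at this
    linarith

theorem mul_eq_of_mem_extremePoints_gaugeStates {X : Type*} [TopologicalSpace X] [CompactSpace X]
    {f : C(X, ℂ) → ℂ} (hf : f ∈ (gaugeStates (fun v : C(X, ℂ) => ‖v‖) 1).extremePoints ℝ)
    (u g : C(X, ℂ)) : f (u * g) = f u * f g := by
  obtain ⟨hfK, hext⟩ := mem_extremePoints.mp hf
  have hfK' := hfK
  obtain ⟨hadd, hsmul, hone, hle⟩ := hfK'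
  have unit : ∀ (h : C(X, ℂ)) (η : X → ℝ), (∀ x, h x = η x) → (∀ x, 0 ≤ η x) → (∀ x, η x ≤ 1) →
      ∀ g, f (h * g) = f h * f g := by
    intro h η hη h0 h1 g
    obtain ⟨t, ht0, ht1, hft, hb⟩ := gaugeStates_continuousMap_norm_apply_mul_le hfK hη h0 h1
    obtain ⟨s, hs0, hs1, hfs, hb'⟩ := gaugeStates_continuousMap_norm_apply_mul_le hfK
      (h := 1 - h) (η := fun x => 1 - η x) (fun x => by simp [hη])
      (fun x => by linarith [h1 x]) (fun x => by linarith [h0 x])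
    have hst : t + s = 1 := by
      have : f h + f (1 - h) = 1 := by rw [← hadd, add_sub_cancel, hone]
      rw [hft, hfs] at this
      exact_mod_cast this
    have hsplit : ∀ g, f g = f (h * g) + f ((1 - h) * g) := by
      intro g; rw [← hadd]; congr 1; ring
    rcases ht0.eq_or_lt with ht | ht
    · have : ‖f (h * g)‖ ≤ 0 := by simpa [← ht] using hb g
      rw [norm_le_zero_iff.mp this, hft, ← ht]; simp
    rcases hs0.eq_or_lt with hs | hs
    · have : ‖f ((1 - h) * g)‖ ≤ 0 := by simpa [← hs] using hb' g
      rw [hsplit g, norm_le_zero_iff.mp this, hft, show t = 1 by linarith]; simp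
    have mem : ∀ (k : C(X, ℂ)) (r : ℝ), 0 < r → f k = r → (∀ g, ‖f (k * g)‖ ≤ r * ‖g‖) →
        (fun g => (r : ℂ)⁻¹ * f (k * g)) ∈ gaugeStates (fun v : C(X, ℂ) => ‖v‖) 1 := by
      intro k r hr hk hkb
      have hr' : (r : ℂ) ≠ 0 := by exact_mod_cast hr.ne'
      refine ⟨fun x y => ?_, fun c x => ?_, ?_, fun v => ?_⟩
      · simp only [mul_add, hadd]
      · simp only [mul_smul_comm, hsmul]; ring
      · simp only [mul_one, hk, inv_mul_cancel₀ hr']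
      · rw [norm_mul, norm_inv, Complex.norm_real, Real.norm_of_nonneg hr.le, inv_mul_le_iff₀ hr]
        exact hkb v
    have := (hext _ (mem h t ht hft hb) _ (mem (1 - h) s hs hfs hb')
      ⟨t, s, ht, hs, hst, by
        have ht' : (t : ℂ) ≠ 0 := by exact_mod_cast ht.ne'
        have hs' : (s : ℂ) ≠ 0 := by exact_mod_cast hs.ne'
        funext g
        simp only [Pi.add_apply, Pi.smul_apply, Complex.real_smul]
        rw [mul_inv_cancel_left₀ ht', mul_inv_cancel_left₀ hs', ← hsplit]⟩).1
    have hg := congrFun this g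
    have ht' : (t : ℂ) ≠ 0 := by exact_mod_cast ht.ne'
    rw [hft, ← hg, mul_inv_cancel_left₀ ht']
  have real : ∀ (v : C(X, ℂ)) (η : X → ℝ), (∀ x, v x = η x) → ∀ g, f (v * g) = f v * f g := by
    intro v η hη g
    set c : ℝ := ‖v‖ + 1 with hc
    have hcpos : 0 < c := by positivity
    have hbd : ∀ x, |η x| ≤ c := by
      intro x
      have := v.norm_coe_le_norm x
      rw [hη, Complex.norm_real, Real.norm_eq_abs] at this
      linarith
    set h : C(X, ℂ) := ((2 * c : ℝ) : ℂ)⁻¹ • (v + (c : ℂ) • 1) with hh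
    have hhx : ∀ x, h x = (((2 * c)⁻¹ * (η x + c) : ℝ) : ℂ) := by
      intro x; simp [hh, hη]; ring
    have hmul := unit h _ hhx
      (fun x => mul_nonneg (by positivity) (by linarith [(abs_le.mp (hbd x)).1]))
      (fun x => by
        rw [inv_mul_le_iff₀ (by positivity)]; linarith [(abs_le.mp (hbd x)).2]) g
    have hcc : ((2 * c : ℝ) : ℂ) ≠ 0 := by exact_mod_cast (by positivity : (2 * c) ≠ 0)
    rw [hh, smul_mul_assoc, hsmul, hsmul, add_mul, smul_mul_assoc, one_mul, hadd, hadd, hsmul,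
      hsmul, hone, mul_assoc] at hmul
    have := mul_left_cancel₀ (inv_ne_zero hcc) hmul
    linear_combination this
  have hu : u = (⟨fun x => ((u x).re : ℂ), by fun_prop⟩ : C(X, ℂ)) +
      Complex.I • (⟨fun x => ((u x).im : ℂ), by fun_prop⟩ : C(X, ℂ)) := by
    ext x
    simp [mul_comm Complex.I, Complex.re_add_im]
  rw [hu, add_mul, smul_mul_assoc, hadd, hadd, hsmul, hsmul, real _ _ (fun x => rfl),
    real _ _ (fun x => rfl)]
  ring

theorem norm_gelfandTransform_eq {P : Type*} [NormedCommRing P] [NormedAlgebra ℂ P]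
    [CompleteSpace P] (a : P) :
    ‖WeakDual.gelfandTransform ℂ P a‖ = (spectralRadius ℂ a).toReal := by
  apply le_antisymm
  · rw [ContinuousMap.norm_le _ ENNReal.toReal_nonneg]
    intro φ
    exact norm_le_spectralRadius_toReal (WeakDual.CharacterSpace.apply_mem_spectrum φ a)
  · refine ENNReal.toReal_le_of_le_ofReal (norm_nonneg _) (iSup₂_le fun z hz => ?_)
    obtain ⟨φ, rfl⟩ := WeakDual.CharacterSpace.mem_spectrum_iff_exists.mp hz
    rw [← enorm_eq_nnnorm, ← ofReal_norm]
    exact ENNReal.ofReal_le_ofReal ((WeakDual.gelfandTransform ℂ P a).norm_coe_le_norm φ)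

/-- Every state dominated by the spectral radius extends along the Gelfand transform. -/
theorem exists_gaugeStates_extension {P : Type*} [NormedCommRing P] [NormedAlgebra ℂ P]
    [CompleteSpace P] {f : P → ℂ}
    (hf : f ∈ gaugeStates (fun a : P => (spectralRadius ℂ a).toReal) 1) :
    ∃ g ∈ gaugeStates (fun v : C(WeakDual.characterSpace ℂ P, ℂ) => ‖v‖) 1,
      ∀ a, g (WeakDual.gelfandTransform ℂ P a) = f a := by
  obtain ⟨hadd, hsmul, hone, hle⟩ := hf
  let f' : P →ₗ[ℂ] ℂ := ⟨⟨f, hadd⟩, hsmul⟩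
  let j : P →ₗ[ℂ] C(WeakDual.characterSpace ℂ P, ℂ) := (WeakDual.gelfandTransform ℂ P).toLinearMap
  have hj : ∀ a, ‖f' a‖ ≤ ‖j a‖ := fun a => (hle a).trans_eq (norm_gelfandTransform_eq a).symm
  have hker : LinearMap.ker j ≤ LinearMap.ker f' := by
    intro a ha
    have h := hj a
    rw [LinearMap.mem_ker.mp ha, norm_zero] at h
    exact norm_le_zero_iff.mp h
  let φ : LinearMap.range j →ₗ[ℂ] ℂ :=
    (LinearMap.ker j).liftQ f' hker ∘ₗ j.quotKerEquivRange.symm.toLinearMap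
  have hφ : ∀ a, φ ⟨j a, LinearMap.mem_range_self j a⟩ = f a := by
    intro a
    have : j.quotKerEquivRange.symm ⟨j a, LinearMap.mem_range_self j a⟩ =
        (LinearMap.ker j).mkQ a := j.quotKerEquivRange_symm_apply_image a _
    change (LinearMap.ker j).liftQ f' hker (j.quotKerEquivRange.symm _) = f a
    rw [this]
    rfl
  have hφle : ∀ v, ‖φ v‖ ≤ 1 * ‖v‖ := by
    rintro ⟨_, a, rfl⟩
    rw [hφ a, one_mul]
    exact hj a
  obtain ⟨g, hg, hgn⟩ := exists_extension_norm_eq (LinearMap.range j) (φ.mkContinuous 1 hφle)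
  have hval : ∀ a, g (j a) = f a := fun a => by
    rw [← hφ a]; exact hg ⟨j a, LinearMap.mem_range_self j a⟩
  refine ⟨g, ⟨map_add g, fun c x => map_smul g c x, ?_, fun v => ?_⟩, hval⟩
  · have := hval 1
    rwa [show j 1 = 1 from map_one (WeakDual.gelfandTransform ℂ P), hone] at this
  · calc ‖g v‖ ≤ ‖g‖ * ‖v‖ := g.le_opNorm v
      _ ≤ 1 * ‖v‖ := by
          gcongr
          rw [hgn]
          exact LinearMap.mkContinuous_norm_le _ zero_le_one _
      _ = ‖v‖ := one_mul _

/-- Extreme states of a commutative Banach algebra are multiplicative. -/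
theorem mul_eq_of_mem_extremePoints_gaugeStates_spectralRadius {P : Type*} [NormedCommRing P]
    [NormedAlgebra ℂ P] [CompleteSpace P] {f : P → ℂ}
    (hf : f ∈ (gaugeStates (fun a : P => (spectralRadius ℂ a).toReal) 1).extremePoints ℝ)
    (a b : P) : f (a * b) = f a * f b := by
  let X := WeakDual.characterSpace ℂ P
  let res : (C(X, ℂ) → ℂ) →L[ℝ] (P → ℂ) :=
    ContinuousLinearMap.pi fun a => ContinuousLinearMap.proj (WeakDual.gelfandTransform ℂ P a)
  have himage : res.toContinuousAffineMap '' gaugeStates (fun v : C(X, ℂ) => ‖v‖) 1 =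
      gaugeStates (fun a : P => (spectralRadius ℂ a).toReal) 1 := by
    apply Set.Subset.antisymm
    · rintro _ ⟨g, ⟨hadd, hsmul, hone, hle⟩, rfl⟩
      refine ⟨fun x y => ?_, fun c x => ?_, ?_, fun v => ?_⟩
      · change g _ = g _ + g _
        rw [map_add, hadd]
      · change g _ = c * g _
        rw [map_smul, hsmul]
      · change g _ = 1
        rw [map_one, hone]
      · exact (hle _).trans_eq (norm_gelfandTransform_eq v)
    · intro f hf
      obtain ⟨g, hg, hgf⟩ := exists_gaugeStates_extension hf
      exact ⟨g, hg, funext hgf⟩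
  obtain ⟨g, hg, rfl⟩ := surjOn_extremePoints_image res.toContinuousAffineMap
    (isCompact_gaugeStates (fun v : C(X, ℂ) => ‖v‖) 1) (himage ▸ hf)
  change g _ = g _ * g _
  rw [map_mul, mul_eq_of_mem_extremePoints_gaugeStates hg]

/-- Nagasawa-type theorem: a unital surjective spectral isometry between commutative Banach
algebras preserves invertibility. -/
theorem isUnit_map_of_spectralRadius_eq {P Q : Type*} [NormedCommRing P] [NormedAlgebra ℂ P]
    [CompleteSpace P] [NormedCommRing Q] [NormedAlgebra ℂ Q] [CompleteSpace Q] (T : P →ₗ[ℂ] Q)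
    (hT : Function.Surjective T) (hT1 : T 1 = 1)
    (hρ : ∀ a, spectralRadius ℂ (T a) = spectralRadius ℂ a) {a : P} (ha : IsUnit a) :
    IsUnit (T a) := by
  obtain ⟨b, hab⟩ := ha.exists_right_inv
  set KP := gaugeStates (fun a : P => (spectralRadius ℂ a).toReal) 1
  set KQ := gaugeStates (fun a : Q => (spectralRadius ℂ a).toReal) 1
  have hpull : ∀ f ∈ KQ, f ∘ T ∈ KP := by
    rintro f ⟨hadd, hsmul, hone, hle⟩
    refine ⟨fun x y => ?_, fun c x => ?_, ?_, fun v => ?_⟩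
    · simp [hadd]
    · simp [hsmul]
    · simp [hT1, hone]
    · exact (hle _).trans_eq (congrArg ENNReal.toReal (hρ v))
  have hpush : ∀ g ∈ KP, ∃ f ∈ KQ, f ∘ T = g := by
    rintro g ⟨hadd, hsmul, hone, hle⟩
    have hinj : ∀ x y, T x = T y → g x = g y := by
      intro x y hxy
      have h := hle (x - y)
      simp only at h
      rw [← hρ, map_sub, hxy, sub_self, spectrum.spectralRadius_zero, ENNReal.toReal_zero,
        norm_le_zero_iff, sub_eq_add_neg, ← neg_one_smul ℂ y, hadd, hsmul] at h
      linear_combination h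
    have hs : ∀ q, T (Function.surjInv hT q) = q := Function.surjInv_eq hT
    refine ⟨fun q => g (Function.surjInv hT q), ⟨fun x y => ?_, fun c x => ?_, ?_, fun v => ?_⟩, ?_⟩
    · rw [← hadd]; exact hinj _ _ (by simp [hs])
    · rw [← hsmul]; exact hinj _ _ (by simp [hs])
    · rw [← hone]; exact hinj _ _ (by simp [hs, hT1])
    · refine (hle _).trans_eq ?_
      simp only [← hρ, hs]
    · funext x; exact hinj _ _ (hs _)
  have hextr : ∀ f ∈ KQ.extremePoints ℝ, f ∘ T ∈ KP.extremePoints ℝ := by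
    intro f hf
    obtain ⟨hfK, hext⟩ := mem_extremePoints_iff_left.mp hf
    refine mem_extremePoints_iff_left.mpr ⟨hpull f hfK, ?_⟩
    intro g₁ hg₁ g₂ hg₂ hseg
    obtain ⟨f₁, hf₁, rfl⟩ := hpush g₁ hg₁
    obtain ⟨f₂, hf₂, rfl⟩ := hpush g₂ hg₂
    obtain ⟨s, t, hs, ht, hst, h⟩ := hseg
    rw [hext f₁ hf₁ f₂ hf₂ ⟨s, t, hs, ht, hst, ?_⟩]
    funext q
    obtain ⟨x, rfl⟩ := hT q
    exact congrFun h x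
  have hzero : ∀ f ∈ KQ, f (T a * T b) = 1 := by
    have hclosed : IsClosed {f : Q → ℂ | f (T a * T b) = 1} :=
      isClosed_eq (by fun_prop) (by fun_prop)
    have hconv : Convex ℝ {f : Q → ℂ | f (T a * T b) = 1} := by
      intro f hf g hg s t hs ht hst
      simp only [Set.mem_ofPred_eq] at hf hg
      simp only [Set.mem_ofPred_eq, Pi.add_apply, Pi.smul_apply, hf, hg, Complex.real_smul, mul_one]
      exact_mod_cast hst
    have hsub : KQ.extremePoints ℝ ⊆ {f : Q → ℂ | f (T a * T b) = 1} := by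
      intro f hf
      have h1 := mul_eq_of_mem_extremePoints_gaugeStates_spectralRadius hf (T a) (T b)
      have h2 := mul_eq_of_mem_extremePoints_gaugeStates_spectralRadius (hextr f hf) a b
      simp only [Function.comp, hab, hT1] at h2
      rw [Set.mem_ofPred_eq, h1, ← h2]
      exact hf.1.2.2.1
    have := closure_minimal (convexHull_min hsub hconv) hclosed
    rw [closure_convexHull_extremePoints (isCompact_gaugeStates _ _) (convex_gaugeStates _ _)]
      at this
    exact this
  by_contra hu
  obtain ⟨φ, hφ⟩ := WeakDual.CharacterSpace.exists_apply_eq_zero hu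
  have := hzero φ ⟨map_add φ, fun c x => map_smul φ c x, map_one φ, fun v =>
    norm_le_spectralRadius_toReal (WeakDual.CharacterSpace.apply_mem_spectrum φ v)⟩
  rw [map_mul, hφ, zero_mul] at this
  exact zero_ne_one this

/-- The bicommutant of a set, as a subalgebra. -/
abbrev bicommutant {A : Type*} [Ring A] [Algebra ℂ A] (s : Set A) : Subalgebra ℂ A :=
  Subalgebra.centralizer ℂ (s.centralizer)

theorem isUnit_bicommutant_coe_iff {A : Type*} [Ring A] [Algebra ℂ A] {s : Set A}
    {x : bicommutant s} : IsUnit (x : A) ↔ IsUnit x := by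
  refine ⟨fun h => ?_, fun h => h.map (bicommutant s).val⟩
  obtain ⟨u, hu⟩ := h
  have hinv : ((u⁻¹ : Aˣ) : A) ∈ bicommutant s := by
    rw [Subalgebra.mem_centralizer_iff]
    intro g hg
    have h1 : Commute g (u : A) := by
      rw [hu]; exact Subalgebra.mem_centralizer_iff ℂ |>.mp x.2 g hg
    exact h1.units_inv_right
  refine ⟨⟨x, ⟨_, hinv⟩, Subtype.ext ?_, Subtype.ext ?_⟩, rfl⟩
  · change (x : A) * _ = 1
    rw [← hu, Units.mul_inv]
  · change _ * (x : A) = 1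
    rw [← hu, Units.inv_mul]

theorem spectralRadius_bicommutant_coe {A : Type*} [Ring A] [Algebra ℂ A] {s : Set A}
    (x : bicommutant s) : spectralRadius ℂ (x : A) = spectralRadius ℂ x := by
  have h : spectrum ℂ (x : A) = spectrum ℂ x := by
    ext z
    rw [spectrum.mem_iff, spectrum.mem_iff, ← isUnit_bicommutant_coe_iff]
    rfl
  unfold spectralRadius
  rw [h]

/-- The bicommutant of a commuting set is a commutative Banach algebra. -/
abbrev bicommutantNormedCommRing {A : Type*} [NormedRing A] [NormedAlgebra ℂ A] {s : Set A}
    (hs : ∀ x ∈ s, ∀ y ∈ s, x * y = y * x) : NormedCommRing (bicommutant s) where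
  __ := (inferInstance : NormedRing (bicommutant s))
  mul_comm x y := Subtype.ext (Set.centralizer_centralizer_comm_of_comm hs x x.2 y y.2)

theorem isClosed_bicommutant {A : Type*} [NormedRing A] [NormedAlgebra ℂ A] (s : Set A) :
    IsClosed (bicommutant s : Set A) :=
  Set.isClosed_centralizer _

theorem spectralRadius_add_le_of_commute {A : Type*} [NormedRing A] [NormedAlgebra ℂ A]
    [CompleteSpace A] {x y : A} (h : x * y = y * x) :
    (spectralRadius ℂ (x + y)).toReal ≤
      (spectralRadius ℂ x).toReal + (spectralRadius ℂ y).toReal := by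
  have hs : ∀ a ∈ ({x, y} : Set A), ∀ b ∈ ({x, y} : Set A), a * b = b * a := by
    rintro a (rfl | rfl) b (rfl | rfl) <;> simp [h]
  let := bicommutantNormedCommRing hs
  let : NormedAlgebra ℂ (bicommutant ({x, y} : Set A)) :=
    { (inferInstance : Algebra ℂ (bicommutant ({x, y} : Set A))) with
      norm_smul_le := fun c v => norm_smul_le c (v : A) }
  have : CompleteSpace (bicommutant ({x, y} : Set A)) :=
    (isClosed_bicommutant ({x, y} : Set A)).completeSpace_coe
  let x' : bicommutant ({x, y} : Set A) := ⟨x, Set.subset_centralizer_centralizer (by simp)⟩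
  let y' : bicommutant ({x, y} : Set A) := ⟨y, Set.subset_centralizer_centralizer (by simp)⟩
  have hx := spectralRadius_bicommutant_coe x'
  have hy := spectralRadius_bicommutant_coe y'
  have hxy := spectralRadius_bicommutant_coe (x' + y')
  change spectralRadius ℂ x = _ at hx
  change spectralRadius ℂ y = _ at hy
  change spectralRadius ℂ (x + y) = _ at hxy
  rw [hx, hy, hxy, ← norm_gelfandTransform_eq, ← norm_gelfandTransform_eq,
    ← norm_gelfandTransform_eq, map_add]
  exact norm_add_le _ _

/-- Invertibility is preserved by a surjective unital spectral isometry that preserves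
commutativity in both directions. -/
theorem isUnit_map_of_forall_commute_iff {A B : Type*} [NormedRing A] [NormedAlgebra ℂ A]
    [CompleteSpace A] [NormedRing B] [NormedAlgebra ℂ B] [CompleteSpace B] (T : A →ₗ[ℂ] B)
    (hT : Function.Surjective T) (hT1 : T 1 = 1)
    (hρ : ∀ a, spectralRadius ℂ (T a) = spectralRadius ℂ a)
    (hcomm : ∀ x y, T x * T y = T y * T x ↔ x * y = y * x) {a : A} (ha : IsUnit a) :
    IsUnit (T a) := by
  have hmem : ∀ x, T x ∈ bicommutant {T a} ↔ x ∈ bicommutant {a} := by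
    intro x
    simp only [Subalgebra.mem_centralizer_iff, Set.mem_centralizer_iff, Set.mem_singleton_iff,
      forall_eq, hT.forall, hcomm]
  have hsA : ∀ x ∈ ({a} : Set A), ∀ y ∈ ({a} : Set A), x * y = y * x := by
    rintro x rfl y rfl; rfl
  have hsB : ∀ x ∈ ({T a} : Set B), ∀ y ∈ ({T a} : Set B), x * y = y * x := by
    rintro x rfl y rfl; rfl
  let := bicommutantNormedCommRing hsA
  let := bicommutantNormedCommRing hsB
  let : NormedAlgebra ℂ (bicommutant ({a} : Set A)) :=
    { (inferInstance : Algebra ℂ (bicommutant ({a} : Set A))) with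
      norm_smul_le := fun c v => norm_smul_le c (v : A) }
  let : NormedAlgebra ℂ (bicommutant ({T a} : Set B)) :=
    { (inferInstance : Algebra ℂ (bicommutant ({T a} : Set B))) with
      norm_smul_le := fun c v => norm_smul_le c (v : B) }
  have : CompleteSpace (bicommutant ({a} : Set A)) := (isClosed_bicommutant _).completeSpace_coe
  have : CompleteSpace (bicommutant ({T a} : Set B)) :=
    (isClosed_bicommutant _).completeSpace_coe
  let T' : bicommutant ({a} : Set A) →ₗ[ℂ] bicommutant ({T a} : Set B) :=
    { toFun := fun x => ⟨T x, (hmem x).mpr x.2⟩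
      map_add' := fun x y => Subtype.ext (map_add T (x : A) y)
      map_smul' := fun c x => Subtype.ext (map_smul T c (x : A)) }
  have hunit := isUnit_map_of_spectralRadius_eq T'
    (by
      rintro ⟨b, hb⟩
      obtain ⟨x, rfl⟩ := hT b
      exact ⟨⟨x, (hmem x).mp hb⟩, rfl⟩)
    (Subtype.ext hT1)
    (fun x => by
      have h1 := spectralRadius_bicommutant_coe x
      have h2 := spectralRadius_bicommutant_coe (T' x)
      change spectralRadius ℂ (T x) = _ at h2
      exact h2.symm.trans ((hρ x).trans h1))
    (a := ⟨a, Set.subset_centralizer_centralizer rfl⟩)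
    (isUnit_bicommutant_coe_iff.mp ha)
  exact isUnit_bicommutant_coe_iff.mpr hunit

theorem Matrix.eq_zero_of_forall_commute_of_trace_eq_zero {m : Type*} [Fintype m] [DecidableEq m]
    {M : Matrix m m ℂ} (hM : ∀ N, N * M = M * N) (htr : M.trace = 0) : M = 0 := by
  rcases isEmpty_or_nonempty m with hm | hm
  · exact Subsingleton.elim _ _
  obtain ⟨z, rfl⟩ := Matrix.mem_range_scalar_of_commute_single fun i j _ => hM (Matrix.single i j 1)
  have : (Fintype.card m : ℂ) * z = 0 := by
    simpa [Matrix.trace, Matrix.scalar_apply] using htr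
  rcases mul_eq_zero.mp this with h | h
  · exact absurd h (Nat.cast_ne_zero.mpr Fintype.card_ne_zero)
  · simp [h]

/-- If the spectral radius is subadditive on a two-sided ideal `K`, then a finite-dimensional
irreducible representation maps `K` into the center. -/
theorem map_commute_of_spectralRadius_add_le {B : Type*} [NormedRing B] [NormedAlgebra ℂ B]
    [CompleteSpace B] {m : Type*} [Fintype m] [DecidableEq m] (φ : B →ₐ[ℂ] Matrix m m ℂ)
    (hφc : Continuous φ) (hφs : Function.Surjective φ) (K : TwoSidedIdeal B)
    (hK : ∀ k ∈ K, ∀ k' ∈ K, (spectralRadius ℂ (k + k')).toReal ≤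
      (spectralRadius ℂ k).toReal + (spectralRadius ℂ k').toReal)
    {k : B} (hk : k ∈ K) (b : B) : φ b * φ k = φ k * φ b := by
  have hspec : ∀ v, ∀ z ∈ spectrum ℂ (φ v), ‖z‖ ≤ (spectralRadius ℂ v).toReal := fun v z hz =>
    norm_le_spectralRadius_toReal (AlgHom.spectrum_apply_subset φ v hz)
  have hsq : ∀ v, ‖(φ v * φ v).trace‖ ≤ Fintype.card m * (spectralRadius ℂ v).toReal ^ 2 := by
    intro v
    rw [← sq]
    exact Matrix.norm_trace_pow_le_of_spectrum _ (hspec v) two_pos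
  have htrace : ∀ k' ∈ K, (φ (b * k - k * b) * φ k').trace = 0 := by
    intro k' hk'
    let L : B →L[ℂ] ℂ :=
      ⟨Matrix.traceLinearMap m ℂ ℂ ∘ₗ LinearMap.mulRight ℂ (φ k') ∘ₗ φ.toLinearMap, by
        change Continuous fun v => (φ v * φ k').trace
        fun_prop⟩
    have hL : ∀ v, L v = (φ v * φ k').trace := fun v => rfl
    set ρ := (spectralRadius ℂ k).toReal
    set ρ' := (spectralRadius ℂ k').toReal
    rw [← hL]
    refine L.hasFDerivAt.apply_commutator_eq_zero L.differentiable
      (C := Fintype.card m * (ρ + ρ') ^ 2 + Fintype.card m * ρ ^ 2 + Fintype.card m * ρ' ^ 2) ?_ b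
    intro u
    set v : B := u * k * (u⁻¹ : Bˣ) with hv
    have hvK : v ∈ K := K.mul_mem_right _ _ (K.mul_mem_left _ _ hk)
    have hvρ : (spectralRadius ℂ v).toReal = ρ := by rw [hv, spectralRadius_units_conj]
    have e : 2 * L v = (φ (v + k') * φ (v + k')).trace - (φ v * φ v).trace
        - (φ k' * φ k').trace := by
      rw [hL]
      simp only [map_add, add_mul, mul_add, Matrix.trace_add]
      rw [Matrix.trace_mul_comm (φ k') (φ v)]; ring
    have h2 : 2 * ‖L v‖ ≤ Fintype.card m * (ρ + ρ') ^ 2 + Fintype.card m * ρ ^ 2 +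
        Fintype.card m * ρ' ^ 2 := by
      calc 2 * ‖L v‖ = ‖2 * L v‖ := by simp
        _ ≤ ‖(φ (v + k') * φ (v + k')).trace‖ + ‖(φ v * φ v).trace‖ + ‖(φ k' * φ k').trace‖ := by
            rw [e]
            exact (norm_sub_le _ _).trans (add_le_add_left (norm_sub_le _ _) _)
        _ ≤ Fintype.card m * (spectralRadius ℂ (v + k')).toReal ^ 2 +
            Fintype.card m * (spectralRadius ℂ v).toReal ^ 2 + Fintype.card m * ρ' ^ 2 :=
            add_le_add (add_le_add (hsq _) (hsq _)) (hsq _)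
        _ ≤ _ := by
            rw [hvρ]
            gcongr
            rw [← hvρ]
            exact hK v hvK k' hk'
    linarith [norm_nonneg (L v)]
  set z := b * k - k * b with hz
  have hzK : z ∈ K := K.sub_mem (K.mul_mem_left _ _ hk) (K.mul_mem_right _ _ hk)
  have hz0 : φ z = 0 := by
    refine (or_self_iff.mp (Matrix.eq_zero_or_eq_zero_of_forall_mul_mul _ _ fun W => ?_))
    obtain ⟨w, rfl⟩ := hφs W
    refine Matrix.ext_iff_trace_mul_right.mpr fun N => ?_
    obtain ⟨w', rfl⟩ := hφs N
    have := htrace (w * z * w') (K.mul_mem_right _ _ (K.mul_mem_left _ _ hzK))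
    simpa [mul_assoc] using this
  rw [hz, map_sub, map_mul, map_mul, sub_eq_zero] at hz0
  exact hz0

/-- Under the hypotheses of the main theorem, the spectral isometry `T`
satisfies `σ(T a) ⊆ σ(a)` for every `a ∈ A`; in particular `T` preserves invertibility. -/
theorem spectral_isometry_spectrum_shrinks
    {A B : Type*} [NormedRing A] [NormedAlgebra ℂ A] [CompleteSpace A]
    [NormedRing B] [NormedAlgebra ℂ B] [CompleteSpace B]
    (hA : (⊥ : Ideal A).jacobson = ⊥)
    {ι : Type*} (n : ι → ℕ) (hn : ∀ i, 0 < n i)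
    (π : ∀ i, B →ₐ[ℂ] Matrix (Fin (n i)) (Fin (n i)) ℂ)
    (hπcont : ∀ i, Continuous (π i))
    (hπsurj : ∀ i, Function.Surjective (π i))
    (hsep : ∀ b : B, (∀ i, π i b = 0) → b = 0)
    (T : A →ₗ[ℂ] B) (hTsurj : Function.Surjective T) (hT1 : T 1 = 1)
    (hρ : ∀ a : A, spectralRadius ℂ (T a) = spectralRadius ℂ a) :
    ∀ a : A, spectrum ℂ (T a) ⊆ spectrum ℂ a ∧ (IsUnit a → IsUnit (T a)) := by
  have hS : ∀ i, IsMatrixContraction ((π i).toLinearMap ∘ₗ T) := fun i =>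
    { surj := (hπsurj i).comp hTsurj
      map_one := by simp [hT1]
      norm_le := fun a z hz => by
        rw [← hρ]
        exact norm_le_spectralRadius_toReal (AlgHom.spectrum_apply_subset (π i) (T a) hz) }
  have hinj : ∀ x, T x = 0 → x = 0 := by
    intro x hx
    have : x ∈ (⊥ : Ideal A).jacobson :=
      mem_jacobson_of_spectralRadius_commutator_eq_zero
        (by rw [← hρ, hx, spectrum.spectralRadius_zero]) fun a => by
        rw [← hρ, hsep (T (x * a - a * x)) fun i => ?_, spectrum.spectralRadius_zero]
        exact (hS i).map_commutator_eq_zero_of_commute (by simp [hx])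
    rwa [hA] at this
  have hback : ∀ x y, T x * T y = T y * T x → x * y = y * x := by
    intro x y h
    refine sub_eq_zero.mp (hinj _ (hsep _ fun i => ?_))
    refine (hS i).map_commutator_eq_zero_of_commute ?_
    simp only [LinearMap.comp_apply, AlgHom.toLinearMap_apply]
    rw [← map_mul (π i), ← map_mul (π i), h, sub_self]
  have hforw : ∀ x y, x * y = y * x → T x * T y = T y * T x := by
    intro x y h
    let K : TwoSidedIdeal B := TwoSidedIdeal.mk'
      {k | ∀ i, (∃ u v, π i (T (u * v - v * u)) ≠ 0) → π i k = 0}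
      (fun i _ => map_zero _) (fun hk hk' i hi => by rw [map_add, hk i hi, hk' i hi, add_zero])
      (fun hk i hi => by rw [map_neg, hk i hi, neg_zero])
      (fun hk i hi => by rw [map_mul, hk i hi, mul_zero])
      (fun hk i hi => by rw [map_mul, hk i hi, zero_mul])
    have hKmem : ∀ k, k ∈ K ↔ ∀ i, (∃ u v, π i (T (u * v - v * u)) ≠ 0) → π i k = 0 :=
      fun k => TwoSidedIdeal.mem_mk' ..
    have hcentral : ∀ l, T l ∈ K → ∀ a, a * l = l * a := by
      intro l hl a
      refine sub_eq_zero.mp (hinj _ (hsep _ fun i => ?_))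
      by_cases hi : ∃ u v, π i (T (u * v - v * u)) ≠ 0
      · exact (hS i).map_commutator_eq_zero ((hKmem _).mp hl i hi) a
      · push Not at hi
        exact hi a l
    have hsub : ∀ k ∈ K, ∀ k' ∈ K, (spectralRadius ℂ (k + k')).toReal ≤
        (spectralRadius ℂ k).toReal + (spectralRadius ℂ k').toReal := by
      intro k hk k' hk'
      obtain ⟨l, rfl⟩ := hTsurj k
      obtain ⟨l', rfl⟩ := hTsurj k'
      rw [← map_add, hρ, hρ, hρ]
      exact spectralRadius_add_le_of_commute (hcentral l' hk' l)
    have hmem : T x * T y - T y * T x ∈ K := by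
      refine (hKmem _).mpr fun i hi => ?_
      have := (hS i).commute_of_map_commutator_eq_zero hi (x := x) (y := y) (by simp [h])
      simpa using this
    refine sub_eq_zero.mp (hsep _ fun j => ?_)
    refine Matrix.eq_zero_of_forall_commute_of_trace_eq_zero (fun N => ?_) ?_
    · obtain ⟨b, rfl⟩ := hπsurj j N
      exact map_commute_of_spectralRadius_add_le (π j) (hπcont j) (hπsurj j) K hsub hmem b
    · rw [map_sub, map_mul, map_mul, Matrix.trace_sub, Matrix.trace_mul_comm, sub_self]
  have hunit : ∀ a, IsUnit a → IsUnit (T a) := fun a ha =>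
    isUnit_map_of_forall_commute_iff T hTsurj hT1 hρ
      (fun x y => ⟨hback x y, hforw x y⟩) ha
  refine fun a => ⟨fun z hz hu => hz ?_, hunit a⟩
  have := hunit _ hu
  rwa [map_sub, Algebra.algebraMap_eq_smul_one, map_smul, hT1,
    ← Algebra.algebraMap_eq_smul_one] at this
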